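/- Let $U\subseteq\mathbb R^2$ be open and connected (and non-empty) and let $x:U\to\mathbb R^3$ be a smooth immersion. For a smooth immersion $y:U\to\mathbb R^3$ and a smooth unit normal field $\nu$ along $y$ put $g_{ij}=\langle y_{/i},y_{/j}\rangle$, $b_{ij}=\langle y_{/ij},\nu\rangle$, $e_{ij}=\langle \nu_{/i},\nu_{/j}\rangle$ (the first, second and third fundamental forms, where $_{/i}=\partial/\partial u^i$), $K=\det(b_{ij})/\det(g_{ij})$ and $H=\tfrac12 g^{ij}b_{ij}$ with $(g^{ij})=(g_{ij})^{-1}$. Let $n=(x_{/1}\times x_{/2})/\|x_{/1}\times x_{/2}\|$ be the Gauss map of $x$, and let $e_{ij},H,K$ be the quantities of $x$ with respect to $n$. Assume that $\det(b_{ij})\neq0$ on $U$ (no parabolic points), and let $\rho\in\mathbb R\setminus\{0\}$ be such that $1-2\rho H+\rho^2K\neq0$ on $U$. Then the parallel surface $x^*=x+\rho n$ is a smooth immersion of $U$, and it has the same unit normal as $x$: the field $n$ is a unit normal field along $x^*$, and more precisely $$\frac{x^*_{/1}\times x^*_{/2}}{\|x^*_{/1}\times x^*_{/2}\|}=\operatorname{sign}(1-2\rho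 H+\rho^2K)\,n .$$ The third fundamental form $e^*_{ij}$ of $x^*$ (which does not depend on the choice of sign of the unit normal of $x^*$) satisfies $e^*_{ij}=e_{ij}$ on $U$. If $x^*$ is oriented by the common unit normal $n^*=n$, then its mean curvature $H^*$ and Gauss curvature $K^*$ satisfy $K^*\neq0$ and $$\frac{H^*}{K^*}=\frac HK-\rho\qquad\text{on }U .$$ -/

import Mathlib

open Matrix

/-- The parameter space `ℝ²`. -/
abbrev Param : Type := Fin 2 → ℝ

/-- Vectors in Euclidean 3-space; the Euclidean inner product is the dot product `⬝ᵥ`. -/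
abbrev Vec3 : Type := Fin 3 → ℝ

/-- Partial derivative of a vector-valued function in the `i`-th coordinate direction. -/
noncomputable def pd (i : Fin 2) (f : Param → Vec3) (u : Param) : Vec3 :=
  fderiv ℝ f u (Pi.single i 1)

/-- The Euclidean norm on `ℝ³`. -/
noncomputable def norm3 (a : Vec3) : ℝ := Real.sqrt (a ⬝ᵥ a)

/-- `x` is an immersion on `U`: the partial derivatives are linearly independent. -/
def Immersed (x : Param → Vec3) (U : Set Param) : Prop :=
  ∀ u ∈ U, LinearIndependent ℝ ![pd 0 x u, pd 1 x u]

/-- The Gauss map `n = (x_{/1} × x_{/2}) / ‖x_{/1} × x_{/2}‖`. -/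
noncomputable def gaussMap (x : Param → Vec3) (u : Param) : Vec3 :=
  (norm3 (crossProduct (pd 0 x u) (pd 1 x u)))⁻¹ • crossProduct (pd 0 x u) (pd 1 x u)

/-- `ν` is a field of unit normal vectors along the surface `x` over `U`. -/
def IsUnitNormalOn (x ν : Param → Vec3) (U : Set Param) : Prop :=
  ∀ u ∈ U, norm3 (ν u) = 1 ∧ ∀ i, pd i x u ⬝ᵥ ν u = 0

/-- Components `g_{ij}` of the first fundamental form of `x`. -/
noncomputable def fformI (x : Param → Vec3) (u : Param) : Matrix (Fin 2) (Fin 2) ℝ :=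
  Matrix.of fun i j => pd i x u ⬝ᵥ pd j x u

/-- Components `b_{ij} = ⟨∂²x/∂u^i∂u^j, ν⟩` of the second fundamental form of the surface `x`
oriented by the unit normal field `ν`. -/
noncomputable def fformII (x ν : Param → Vec3) (u : Param) : Matrix (Fin 2) (Fin 2) ℝ :=
  Matrix.of fun i j => pd i (pd j x) u ⬝ᵥ ν u

/-- Components `e_{ij} = ⟨ν_{/i}, ν_{/j}⟩` of the third fundamental form of a surface with
unit normal field `ν`. -/
noncomputable def fformIII (ν : Param → Vec3) (u : Param) : Matrix (Fin 2) (Fin 2) ℝ :=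
  Matrix.of fun i j => pd i ν u ⬝ᵥ pd j ν u

/-- The Gauss curvature `K = det(b_{ij}) / det(g_{ij})` of the surface `x` oriented by `ν`. -/
noncomputable def gaussCurv (x ν : Param → Vec3) (u : Param) : ℝ :=
  (fformII x ν u).det / (fformI x u).det

/-- The mean curvature `H = (1/2) g^{ij} b_{ij}` of the surface `x` oriented by `ν`. -/
noncomputable def meanCurv (x ν : Param → Vec3) (u : Param) : ℝ :=
  (1 / 2) * ∑ i, ∑ j, (fformI x u)⁻¹ i j * fformII x ν u i j

/-- The parallel surface `x* = x + ρ n` at directed distance `ρ`, `n` the Gauss map of `x`. -/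
noncomputable def parallelSurface (x : Param → Vec3) (ρ : ℝ) (u : Param) : Vec3 :=
  x u + ρ • gaussMap x u

/-!
In the basis `x_{/1}, x_{/2}` the Weingarten equations read `dn = -S dx` with `S = b g⁻¹`, where
`H = tr S / 2` and `K = det S`. Hence `dx* = (1 - ρS) dx`: the parallel surface keeps the normal
`n`, its area vector is multiplied by `det (1 - ρS) = 1 - 2ρH + ρ²K`, and reading
`dn = -S (1 - ρS)⁻¹ dx*` as its Weingarten equations gives `S* = S (1 - ρS)⁻¹`, so that
`K* = K / det (1 - ρS)` and `H* = (H - ρK) / det (1 - ρS)`.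
-/

section VectorAlgebra

theorem eq_zero_of_triple_product_ne_zero {R : Type*} [CommRing R] [IsDomain R]
    {a b c v : Fin 3 → R} (habc : c ⬝ᵥ a ⨯₃ b ≠ 0)
    (ha : a ⬝ᵥ v = 0) (hb : b ⬝ᵥ v = 0) (hc : c ⬝ᵥ v = 0) : v = 0 := by
  rw [triple_product_eq_det] at habc
  refine eq_zero_of_mulVec_eq_zero habc (funext fun i => ?_)
  fin_cases i
  exacts [hc, ha, hb]

theorem crossProduct_rows_mul {R : Type*} [CommRing R] (A : Matrix (Fin 2) (Fin 2) R)
    (X : Matrix (Fin 2) (Fin 3) R) : (A * X) 0 ⨯₃ (A * X) 1 = A.det • X 0 ⨯₃ X 1 := by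
  have hrow (i : Fin 2) : (A * X) i = A i 0 • X 0 + A i 1 • X 1 := by
    ext k
    exact (mul_apply ..).trans (Fin.sum_univ_two _)
  rw [hrow, hrow, det_fin_two]
  simp only [map_add, map_smul, LinearMap.add_apply, LinearMap.smul_apply, cross_self,
    ← cross_anticomm (X 0) (X 1)]
  module

theorem det_mul_transpose_eq_crossProduct {R : Type*} [CommRing R]
    (X : Matrix (Fin 2) (Fin 3) R) :
    (X * Xᵀ).det = X 0 ⨯₃ X 1 ⬝ᵥ X 0 ⨯₃ X 1 := by
  rw [det_fin_two, cross_dot_cross]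
  rfl

theorem norm3_eq_one_iff {a : Vec3} : norm3 a = 1 ↔ a ⬝ᵥ a = 1 :=
  Real.sqrt_eq_one

theorem norm3_ne_zero_iff {a : Vec3} : norm3 a ≠ 0 ↔ a ≠ 0 := by
  have hpos : 0 < a ⬝ᵥ a ↔ a ≠ 0 := dotProduct_self_star_pos_iff
  rw [norm3, Real.sqrt_ne_zero', hpos]

theorem norm3_smul (r : ℝ) (a : Vec3) : norm3 (r • a) = |r| * norm3 a := by
  rw [norm3, smul_dotProduct, dotProduct_smul, smul_smul, smul_eq_mul,
    Real.sqrt_mul (mul_self_nonneg r), Real.sqrt_mul_self_eq_abs, norm3]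

theorem norm3_inv_norm3_smul {a : Vec3} (ha : a ≠ 0) : norm3 ((norm3 a)⁻¹ • a) = 1 := by
  have hnonneg : 0 ≤ norm3 a := Real.sqrt_nonneg _
  rw [norm3_smul, abs_inv, abs_of_nonneg hnonneg, inv_mul_cancel₀ (norm3_ne_zero_iff.2 ha)]

theorem inv_abs_mul_self (r : ℝ) : |r|⁻¹ * r = Real.sign r := by
  rcases lt_trichotomy r 0 with hr | rfl | hr
  · rw [abs_of_neg hr, Real.sign_of_neg hr, inv_neg, neg_mul, inv_mul_cancel₀ hr.ne]
  · rw [mul_zero, Real.sign_zero]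
  · rw [abs_of_pos hr, Real.sign_of_pos hr, inv_mul_cancel₀ hr.ne']

theorem inv_norm3_smul_smul (r : ℝ) (a : Vec3) :
    (norm3 (r • a))⁻¹ • r • a = Real.sign r • (norm3 a)⁻¹ • a := by
  rw [norm3_smul, smul_smul, smul_smul, mul_inv, mul_right_comm, inv_abs_mul_self]

end VectorAlgebra

section TwoByTwo

theorem det_one_sub_smul_fin_two {R : Type*} [CommRing R] (S : Matrix (Fin 2) (Fin 2) R) (r : R) :
    (1 - r • S).det = 1 - r * S.trace + r ^ 2 * S.det := by
  simp only [det_fin_two, trace_fin_two, Matrix.sub_apply, Matrix.smul_apply, smul_eq_mul,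
    one_apply_eq, one_apply_ne zero_ne_one, one_apply_ne one_ne_zero]
  ring

theorem trace_mul_adjugate_one_sub_smul_fin_two {R : Type*} [CommRing R]
    (S : Matrix (Fin 2) (Fin 2) R) (r : R) :
    (S * (1 - r • S).adjugate).trace = S.trace - 2 * r * S.det := by
  simp only [adjugate_fin_two, trace_fin_two, det_fin_two, mul_apply, Fin.sum_univ_two,
    Matrix.sub_apply, Matrix.smul_apply, smul_eq_mul, one_apply_eq, one_apply_ne zero_ne_one,
    one_apply_ne one_ne_zero, of_apply, cons_val', cons_val_zero, cons_val_one, cons_val_fin_one]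
  ring

end TwoByTwo

section Calculus

open scoped Topology

theorem contDiffOn_bilinear {𝕜 E F G H : Type*} [NontriviallyNormedField 𝕜] [CompleteSpace 𝕜]
    [NormedAddCommGroup E] [NormedSpace 𝕜 E]
    [NormedAddCommGroup F] [NormedSpace 𝕜 F] [FiniteDimensional 𝕜 F]
    [NormedAddCommGroup G] [NormedSpace 𝕜 G] [FiniteDimensional 𝕜 G]
    [NormedAddCommGroup H] [NormedSpace 𝕜 H]
    (B : F →ₗ[𝕜] G →ₗ[𝕜] H) {n : WithTop ℕ∞} {f : E → F} {g : E → G} {U : Set E}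
    (hf : ContDiffOn 𝕜 n f U) (hg : ContDiffOn 𝕜 n g U) :
    ContDiffOn 𝕜 n (fun w => B (f w) (g w)) U :=
  B.toContinuousBilinearMap.isBoundedBilinearMap.contDiff.comp_contDiffOn (hf.prodMk hg)

variable {f g : Param → Vec3} {u : Param} {U : Set Param} {m n : WithTop ℕ∞}

theorem contDiffOn_pd (hU : IsOpen U) (hf : ContDiffOn ℝ m f U) (hnm : n + 1 ≤ m) (i : Fin 2) :
    ContDiffOn ℝ n (pd i f) U :=
  (hf.fderiv_of_isOpen hU hnm).clm_apply contDiffOn_const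

theorem pd_dotProduct_add_eq_zero {c : ℝ} (hf : DifferentiableAt ℝ f u)
    (hg : DifferentiableAt ℝ g u) (hfg : ∀ᶠ w in 𝓝 u, f w ⬝ᵥ g w = c) (i : Fin 2) :
    pd i f u ⬝ᵥ g u + f u ⬝ᵥ pd i g u = 0 := by
  let B := (dotProductBilin (m := Fin 3) (A := ℝ) ℝ ℝ).toContinuousBilinearMap
  have hd := B.hasFDerivAt_of_bilinear hf.hasFDerivAt hg.hasFDerivAt
  have h0 := (hasFDerivAt_const (𝕜 := ℝ) c u).congr_of_eventuallyEq hfg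
  rw [add_comm]
  exact congrArg (· (Pi.single i 1)) (hd.unique h0)

/-- The Jacobian of `f` at `u`, with the partial derivatives as rows, so that the matrix of a
linear map of tangent vectors in the basis `x_{/1}, x_{/2}` multiplies it from the left. -/
noncomputable def jacobianRows (f : Param → Vec3) (u : Param) : Matrix (Fin 2) (Fin 3) ℝ :=
  Matrix.of fun i => pd i f u

theorem jacobianRows_add_smul (hf : DifferentiableAt ℝ f u) (hg : DifferentiableAt ℝ g u) (r : ℝ) :
    jacobianRows (f + r • g) u = jacobianRows f u + r • jacobianRows g u := by
  ext i k
  simp only [jacobianRows, of_apply, pd, Matrix.add_apply, Matrix.smul_apply]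
  rw [fderiv_add hf (hg.const_smul r), fderiv_const_smul hg]
  rfl

theorem fformI_eq_mul_transpose (y : Param → Vec3) (u : Param) :
    fformI y u = jacobianRows y u * (jacobianRows y u)ᵀ :=
  rfl

theorem fformIII_eq_mul_transpose (ν : Param → Vec3) (u : Param) :
    fformIII ν u = jacobianRows ν u * (jacobianRows ν u)ᵀ :=
  rfl

end Calculus

section WeingartenMatrix

/-- The Weingarten matrix `b_{ik} g^{kj}` of the surface `y` oriented by `ν`: its `i`-th
row holds the coordinates of `-ν_{/i}` in the basis `y_{/1}, y_{/2}` of the tangent plane. -/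
noncomputable def weingartenMatrix (y ν : Param → Vec3) (u : Param) : Matrix (Fin 2) (Fin 2) ℝ :=
  fformII y ν u * (fformI y u)⁻¹

theorem fformI_isSymm (y : Param → Vec3) (u : Param) : (fformI y u).IsSymm :=
  IsSymm.ext fun i j => dotProduct_comm (pd j y u) (pd i y u)

theorem gaussCurv_eq_det (y ν : Param → Vec3) (u : Param) :
    gaussCurv y ν u = (weingartenMatrix y ν u).det := by
  rw [gaussCurv, weingartenMatrix, det_mul, det_nonsing_inv, Ring.inverse_eq_inv', div_eq_mul_inv]

theorem two_mul_meanCurv_eq_trace (y ν : Param → Vec3) (u : Param) :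
    2 * meanCurv y ν u = (weingartenMatrix y ν u).trace := by
  have hsymm : ((fformI y u)⁻¹).IsSymm := (fformI_isSymm y u).inv
  rw [meanCurv, ← mul_assoc, mul_one_div_cancel two_ne_zero, one_mul]
  refine Finset.sum_congr rfl fun i _ => ?_
  rw [diag_apply, weingartenMatrix, mul_apply]
  exact Finset.sum_congr rfl fun j _ => by rw [mul_comm, hsymm.apply]

theorem det_one_sub_smul_weingartenMatrix (y ν : Param → Vec3) (ρ : ℝ) (u : Param) :
    (1 - ρ • weingartenMatrix y ν u).det =
      1 - 2 * ρ * meanCurv y ν u + ρ ^ 2 * gaussCurv y ν u := by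
  rw [det_one_sub_smul_fin_two, ← two_mul_meanCurv_eq_trace, ← gaussCurv_eq_det]
  ring

end WeingartenMatrix

section GaussMap

variable {x : Param → Vec3} {U : Set Param} {u : Param}

theorem immersed_iff_crossProduct_ne_zero :
    Immersed x U ↔ ∀ u ∈ U, pd 0 x u ⨯₃ pd 1 x u ≠ 0 :=
  forall₂_congr fun _ _ => crossProduct_ne_zero_iff_linearIndependent.symm

theorem Immersed.isUnit_det_fformI (hx : Immersed x U) (hu : u ∈ U) :
    IsUnit (fformI x u).det := by
  rw [fformI_eq_mul_transpose, det_mul_transpose_eq_crossProduct, isUnit_iff_ne_zero]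
  exact dotProduct_self_eq_zero.not.2 (immersed_iff_crossProduct_ne_zero.1 hx u hu)

theorem Immersed.isUnitNormalOn_gaussMap (hx : Immersed x U) :
    IsUnitNormalOn x (gaussMap x) U := by
  rw [immersed_iff_crossProduct_ne_zero] at hx
  refine fun u hu => ⟨norm3_inv_norm3_smul (hx u hu), fun i => ?_⟩
  fin_cases i <;> simp [gaussMap, dotProduct_smul]

theorem Immersed.contDiffOn_gaussMap {m n : WithTop ℕ∞} (himm : Immersed x U) (hU : IsOpen U)
    (hx : ContDiffOn ℝ m x U) (hnm : n + 1 ≤ m) : ContDiffOn ℝ n (gaussMap x) U := by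
  rw [immersed_iff_crossProduct_ne_zero] at himm
  have hcross : ContDiffOn ℝ n (fun w => pd 0 x w ⨯₃ pd 1 x w) U :=
    contDiffOn_bilinear crossProduct (contDiffOn_pd hU hx hnm 0) (contDiffOn_pd hU hx hnm 1)
  have hdot := contDiffOn_bilinear (dotProductBilin (m := Fin 3) (A := ℝ) ℝ ℝ) hcross hcross
  have hnorm := hdot.sqrt fun w hw => dotProduct_self_eq_zero.not.2 (himm w hw)
  exact (hnorm.inv fun w hw => norm3_ne_zero_iff.2 (himm w hw)).smul hcross

end GaussMap

/-- `y` is a surface of class `C²` immersed over the open set `U` and oriented by the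
differentiable unit normal field `ν`. -/
structure IsOrientedSurfaceOn (y ν : Param → Vec3) (U : Set Param) : Prop where
  isOpen : IsOpen U
  contDiffOn : ContDiffOn ℝ 2 y U
  differentiableOn : DifferentiableOn ℝ ν U
  immersed : Immersed y U
  isUnitNormalOn : IsUnitNormalOn y ν U

theorem Immersed.isOrientedSurfaceOn_gaussMap {x : Param → Vec3} {U : Set Param}
    (himm : Immersed x U) (hU : IsOpen U) (hx : ContDiffOn ℝ 2 x U) :
    IsOrientedSurfaceOn x (gaussMap x) U where
  isOpen := hU
  contDiffOn := hx
  differentiableOn :=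
    (himm.contDiffOn_gaussMap hU hx one_add_one_eq_two.le).differentiableOn one_ne_zero
  immersed := himm
  isUnitNormalOn := himm.isUnitNormalOn_gaussMap

namespace IsOrientedSurfaceOn

variable {y μ ν : Param → Vec3} {U : Set Param} {u : Param} {ρ : ℝ}

theorem differentiableAt (h : IsOrientedSurfaceOn y ν U) (hu : u ∈ U) : DifferentiableAt ℝ y u :=
  (h.contDiffOn.contDiffAt (h.isOpen.mem_nhds hu)).differentiableAt two_ne_zero

theorem differentiableAt_normal (h : IsOrientedSurfaceOn y ν U) (hu : u ∈ U) :
    DifferentiableAt ℝ ν u :=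
  h.differentiableOn.differentiableAt (h.isOpen.mem_nhds hu)

theorem differentiableAt_pd (h : IsOrientedSurfaceOn y ν U) (hu : u ∈ U) (i : Fin 2) :
    DifferentiableAt ℝ (pd i y) u :=
  ((contDiffOn_pd (n := 1) h.isOpen h.contDiffOn one_add_one_eq_two.le i).contDiffAt
    (h.isOpen.mem_nhds hu)).differentiableAt one_ne_zero

theorem eq_zero_of_dotProduct_eq_zero (h : IsOrientedSurfaceOn y ν U) (hu : u ∈ U) {v : Vec3}
    (hy : ∀ i, pd i y u ⬝ᵥ v = 0) (hν : ν u ⬝ᵥ v = 0) : v = 0 := by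
  have hcross := immersed_iff_crossProduct_ne_zero.1 h.immersed u hu
  obtain ⟨hunit, hnormal⟩ := h.isUnitNormalOn u hu
  have hν0 : ν u ≠ 0 := norm3_ne_zero_iff.1 (hunit ▸ one_ne_zero)
  have htriple : ν u ⬝ᵥ pd 0 y u ⨯₃ pd 1 y u ≠ 0 := fun h0 =>
    hν0 (eq_zero_of_triple_product_ne_zero (dotProduct_self_eq_zero.not.2 hcross) (hnormal 0)
      (hnormal 1) ((dotProduct_comm _ _).trans h0))
  exact eq_zero_of_triple_product_ne_zero htriple (hy 0) (hy 1) hν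

theorem fformII_eq_neg_mul_transpose (h : IsOrientedSurfaceOn y ν U) (hu : u ∈ U) :
    fformII y ν u = -(jacobianRows ν u * (jacobianRows y u)ᵀ) := by
  ext i j
  have hprod := pd_dotProduct_add_eq_zero (h.differentiableAt_pd hu j)
    (h.differentiableAt_normal hu)
    (Filter.eventually_of_mem (h.isOpen.mem_nhds hu) fun w hw => (h.isUnitNormalOn w hw).2 j) i
  rw [dotProduct_comm (pd j y u)] at hprod
  exact eq_neg_of_add_eq_zero_left hprod

theorem pd_normal_dotProduct_normal (h : IsOrientedSurfaceOn y ν U) (hu : u ∈ U) (i : Fin 2) :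
    pd i ν u ⬝ᵥ ν u = 0 := by
  have hν := h.differentiableAt_normal hu
  have hprod := pd_dotProduct_add_eq_zero hν hν (Filter.eventually_of_mem (h.isOpen.mem_nhds hu)
    fun w hw => norm3_eq_one_iff.1 (h.isUnitNormalOn w hw).1) i
  rw [dotProduct_comm (ν u)] at hprod
  exact self_eq_neg.1 (eq_neg_of_add_eq_zero_left hprod)

theorem weingarten_equations (h : IsOrientedSurfaceOn y ν U) (hu : u ∈ U) :
    jacobianRows ν u = -(weingartenMatrix y ν u * jacobianRows y u) := by
  set B := jacobianRows ν u + weingartenMatrix y ν u * jacobianRows y u with hB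
  have htangent : B * (jacobianRows y u)ᵀ = 0 := by
    rw [hB, Matrix.add_mul, Matrix.mul_assoc, ← fformI_eq_mul_transpose, weingartenMatrix,
      nonsing_inv_mul_cancel_right _ _ (h.immersed.isUnit_det_fformI hu),
      h.fformII_eq_neg_mul_transpose hu, add_neg_cancel]
  have hnormal : B *ᵥ ν u = 0 := by
    have hy : jacobianRows y u *ᵥ ν u = 0 := funext (h.isUnitNormalOn u hu).2
    have hν : jacobianRows ν u *ᵥ ν u = 0 := funext (h.pd_normal_dotProduct_normal hu)
    rw [hB, add_mulVec, ← mulVec_mulVec, hy, hν, mulVec_zero, add_zero]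
  refine eq_neg_of_add_eq_zero_left (funext fun i => ?_)
  refine h.eq_zero_of_dotProduct_eq_zero hu (fun j => ?_) ?_
  · rw [dotProduct_comm]
    exact congrFun₂ htangent i j
  · rw [dotProduct_comm]
    exact congrFun hnormal i

theorem weingartenMatrix_eq (h : IsOrientedSurfaceOn y ν U) (hu : u ∈ U)
    {S : Matrix (Fin 2) (Fin 2) ℝ} (hS : jacobianRows ν u = -(S * jacobianRows y u)) :
    weingartenMatrix y ν u = S := by
  rw [weingartenMatrix, h.fformII_eq_neg_mul_transpose hu, hS, Matrix.neg_mul (S * _), neg_neg,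
    Matrix.mul_assoc S, ← fformI_eq_mul_transpose,
    mul_nonsing_inv_cancel_right _ _ (h.immersed.isUnit_det_fformI hu)]

theorem fformIII_eq_mul_fformII (h : IsOrientedSurfaceOn y ν U) (hu : u ∈ U) :
    fformIII ν u = weingartenMatrix y ν u * (fformII y ν u)ᵀ := by
  rw [h.fformII_eq_neg_mul_transpose hu, transpose_neg, transpose_mul, transpose_transpose,
    Matrix.mul_neg, ← Matrix.mul_assoc, ← Matrix.neg_mul, ← h.weingarten_equations hu,
    fformIII_eq_mul_transpose]

-- By definition `b_{ij}(u)` is linear in the value of the normal at `u`, and `e = b g⁻¹ bᵀ` is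
-- quadratic in `b`: no continuity of the sign relating the two normals is needed.
theorem fformIII_eq_fformIII (hμ : IsOrientedSurfaceOn y μ U) (hν : IsOrientedSurfaceOn y ν U)
    (hu : u ∈ U) : fformIII μ u = fformIII ν u := by
  obtain ⟨hμ1, hμy⟩ := hμ.isUnitNormalOn u hu
  obtain ⟨hν1, hνy⟩ := hν.isUnitNormalOn u hu
  rw [norm3_eq_one_iff] at hμ1 hν1
  set c := ν u ⬝ᵥ μ u
  have hμν : μ u = c • ν u := by
    refine sub_eq_zero.1 (hν.eq_zero_of_dotProduct_eq_zero hu (fun i => ?_) ?_)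
    · rw [dotProduct_sub, dotProduct_smul, hμy, hνy, smul_zero, sub_zero]
    · rw [dotProduct_sub, dotProduct_smul, hν1, smul_eq_mul, mul_one, sub_self]
  have hc : c * c = 1 := by
    rwa [hμν, smul_dotProduct, dotProduct_smul, hν1, smul_eq_mul, smul_eq_mul, mul_one] at hμ1
  have hII : fformII y μ u = c • fformII y ν u := by
    ext i j
    simp only [fformII, hμν, dotProduct_smul, of_apply, Matrix.smul_apply]
  rw [hμ.fformIII_eq_mul_fformII hu, hν.fformIII_eq_mul_fformII hu, weingartenMatrix, hII,
    transpose_smul, Matrix.smul_mul, Matrix.smul_mul, Matrix.mul_smul, smul_smul, hc, one_smul,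
    weingartenMatrix]

theorem jacobianRows_parallel (h : IsOrientedSurfaceOn y ν U) (hu : u ∈ U) :
    jacobianRows (y + ρ • ν) u = (1 - ρ • weingartenMatrix y ν u) * jacobianRows y u := by
  rw [jacobianRows_add_smul (h.differentiableAt hu) (h.differentiableAt_normal hu),
    h.weingarten_equations hu, Matrix.sub_mul, Matrix.one_mul, smul_neg, Matrix.smul_mul,
    sub_eq_add_neg]

theorem crossProduct_pd_parallel (h : IsOrientedSurfaceOn y ν U) (hu : u ∈ U) :
    pd 0 (y + ρ • ν) u ⨯₃ pd 1 (y + ρ • ν) u =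
      (1 - 2 * ρ * meanCurv y ν u + ρ ^ 2 * gaussCurv y ν u) • pd 0 y u ⨯₃ pd 1 y u := by
  have hrows := crossProduct_rows_mul (1 - ρ • weingartenMatrix y ν u) (jacobianRows y u)
  rwa [← h.jacobianRows_parallel hu, det_one_sub_smul_weingartenMatrix] at hrows

theorem gaussMap_parallel (h : IsOrientedSurfaceOn y ν U) (hu : u ∈ U) :
    gaussMap (y + ρ • ν) u =
      Real.sign (1 - 2 * ρ * meanCurv y ν u + ρ ^ 2 * gaussCurv y ν u) • gaussMap y u := by
  rw [gaussMap, h.crossProduct_pd_parallel hu, inv_norm3_smul_smul, gaussMap]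

theorem immersed_parallel_iff (h : IsOrientedSurfaceOn y ν U) :
    Immersed (y + ρ • ν) U ↔
      ∀ u ∈ U, 1 - 2 * ρ * meanCurv y ν u + ρ ^ 2 * gaussCurv y ν u ≠ 0 := by
  have hy := immersed_iff_crossProduct_ne_zero.1 h.immersed
  refine immersed_iff_crossProduct_ne_zero.trans (forall₂_congr fun u hu => ?_)
  rw [h.crossProduct_pd_parallel hu, smul_ne_zero_iff_left (hy u hu)]

theorem isUnitNormalOn_parallel (h : IsOrientedSurfaceOn y ν U) :
    IsUnitNormalOn (y + ρ • ν) ν U := by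
  refine fun u hu => ⟨(h.isUnitNormalOn u hu).1, fun i => ?_⟩
  have hy : jacobianRows y u *ᵥ ν u = 0 := funext (h.isUnitNormalOn u hu).2
  have hparallel : jacobianRows (y + ρ • ν) u *ᵥ ν u = 0 := by
    rw [h.jacobianRows_parallel hu, ← mulVec_mulVec, hy, mulVec_zero]
  exact congrFun hparallel i

theorem parallel (h : IsOrientedSurfaceOn y ν U) (hν : ContDiffOn ℝ 2 ν U)
    (hreg : ∀ u ∈ U, 1 - 2 * ρ * meanCurv y ν u + ρ ^ 2 * gaussCurv y ν u ≠ 0) :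
    IsOrientedSurfaceOn (y + ρ • ν) ν U where
  isOpen := h.isOpen
  contDiffOn := h.contDiffOn.add (hν.const_smul ρ)
  differentiableOn := h.differentiableOn
  immersed := h.immersed_parallel_iff.2 hreg
  isUnitNormalOn := h.isUnitNormalOn_parallel

theorem weingartenMatrix_parallel (h : IsOrientedSurfaceOn y ν U)
    (h' : IsOrientedSurfaceOn (y + ρ • ν) ν U) (hu : u ∈ U) :
    weingartenMatrix (y + ρ • ν) ν u =
      weingartenMatrix y ν u * (1 - ρ • weingartenMatrix y ν u)⁻¹ := by
  have hreg := h.immersed_parallel_iff.1 h'.immersed u hu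
  rw [← det_one_sub_smul_weingartenMatrix, ← isUnit_iff_ne_zero] at hreg
  refine h'.weingartenMatrix_eq hu ?_
  rw [h.jacobianRows_parallel hu, Matrix.mul_assoc, nonsing_inv_mul_cancel_left _ _ hreg,
    h.weingarten_equations hu]

theorem gaussCurv_parallel (h : IsOrientedSurfaceOn y ν U)
    (h' : IsOrientedSurfaceOn (y + ρ • ν) ν U) (hu : u ∈ U) :
    gaussCurv (y + ρ • ν) ν u =
      gaussCurv y ν u / (1 - 2 * ρ * meanCurv y ν u + ρ ^ 2 * gaussCurv y ν u) := by
  rw [gaussCurv_eq_det, h.weingartenMatrix_parallel h' hu, det_mul, det_nonsing_inv,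
    Ring.inverse_eq_inv', ← gaussCurv_eq_det, det_one_sub_smul_weingartenMatrix, div_eq_mul_inv]

theorem meanCurv_parallel (h : IsOrientedSurfaceOn y ν U)
    (h' : IsOrientedSurfaceOn (y + ρ • ν) ν U) (hu : u ∈ U) :
    meanCurv (y + ρ • ν) ν u = (meanCurv y ν u - ρ * gaussCurv y ν u) /
      (1 - 2 * ρ * meanCurv y ν u + ρ ^ 2 * gaussCurv y ν u) := by
  refine mul_left_cancel₀ (two_ne_zero' ℝ) ?_
  rw [two_mul_meanCurv_eq_trace, h.weingartenMatrix_parallel h' hu, inv_def,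
    Ring.inverse_eq_inv', Matrix.mul_smul, trace_smul, trace_mul_adjugate_one_sub_smul_fin_two,
    ← two_mul_meanCurv_eq_trace, ← gaussCurv_eq_det, det_one_sub_smul_weingartenMatrix, smul_eq_mul]
  ring

theorem gaussCurv_parallel_ne_zero (h : IsOrientedSurfaceOn y ν U)
    (h' : IsOrientedSurfaceOn (y + ρ • ν) ν U) (hu : u ∈ U) (hK : gaussCurv y ν u ≠ 0) :
    gaussCurv (y + ρ • ν) ν u ≠ 0 := by
  rw [h.gaussCurv_parallel h' hu]
  exact div_ne_zero hK (h.immersed_parallel_iff.1 h'.immersed u hu)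

theorem meanCurv_div_gaussCurv_parallel (h : IsOrientedSurfaceOn y ν U)
    (h' : IsOrientedSurfaceOn (y + ρ • ν) ν U) (hu : u ∈ U) (hK : gaussCurv y ν u ≠ 0) :
    meanCurv (y + ρ • ν) ν u / gaussCurv (y + ρ • ν) ν u =
      meanCurv y ν u / gaussCurv y ν u - ρ := by
  have hreg := h.immersed_parallel_iff.1 h'.immersed u hu
  rw [h.meanCurv_parallel h' hu, h.gaussCurv_parallel h' hu, div_div_div_cancel_right₀ hreg,
    sub_div, mul_div_cancel_right₀ _ hK]

end IsOrientedSurfaceOn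

theorem stmt15_general {n : WithTop ℕ∞} (hn : 2 ≤ n) {U : Set Param} {x : Param → Vec3}
    (hU : IsOpen U) (hx : ContDiffOn ℝ (n + 1) x U) (himm : Immersed x U) {ρ : ℝ}
    (hreg : ∀ u ∈ U,
      1 - 2 * ρ * meanCurv x (gaussMap x) u + ρ ^ 2 * gaussCurv x (gaussMap x) u ≠ 0) :
    ContDiffOn ℝ n (parallelSurface x ρ) U ∧
    Immersed (parallelSurface x ρ) U ∧
    IsUnitNormalOn (parallelSurface x ρ) (gaussMap x) U ∧
    ∀ u ∈ U,
      gaussMap (parallelSurface x ρ) u =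
        Real.sign (1 - 2 * ρ * meanCurv x (gaussMap x) u
          + ρ ^ 2 * gaussCurv x (gaussMap x) u) • gaussMap x u ∧
      fformIII (gaussMap (parallelSurface x ρ)) u = fformIII (gaussMap x) u ∧
      ((fformII x (gaussMap x) u).det ≠ 0 →
        gaussCurv (parallelSurface x ρ) (gaussMap x) u ≠ 0 ∧
        meanCurv (parallelSurface x ρ) (gaussMap x) u /
            gaussCurv (parallelSurface x ρ) (gaussMap x) u =
          meanCurv x (gaussMap x) u / gaussCurv x (gaussMap x) u - ρ) := by
  have hxn : ContDiffOn ℝ n x U := hx.of_le le_self_add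
  have hν : ContDiffOn ℝ n (gaussMap x) U := himm.contDiffOn_gaussMap hU hx le_rfl
  have h := himm.isOrientedSurfaceOn_gaussMap hU (hxn.of_le hn)
  have h' : IsOrientedSurfaceOn (parallelSurface x ρ) (gaussMap x) U :=
    h.parallel (hν.of_le hn) hreg
  have hgauss := h'.immersed.isOrientedSurfaceOn_gaussMap hU h'.contDiffOn
  refine ⟨hxn.add (hν.const_smul ρ), h'.immersed, h'.isUnitNormalOn, fun u hu =>
    ⟨h.gaussMap_parallel hu, hgauss.fformIII_eq_fformIII h' hu, fun hpar => ?_⟩⟩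
  have hK : gaussCurv x (gaussMap x) u ≠ 0 :=
    div_ne_zero hpar (himm.isUnit_det_fformI hu).ne_zero
  exact ⟨h.gaussCurv_parallel_ne_zero h' hu hK, h.meanCurv_div_gaussCurv_parallel h' hu hK⟩

/-- The parallel surface `x* = x + ρ n` is a smooth immersion with unit normal field `n`; its Gauss
map formed from `x*_{/1} × x*_{/2}` is `n` up to the sign of `1 - 2ρH + ρ²K`; its third fundamental
form is that of `x`; and, oriented by the common normal `n`, it has `K* ≠ 0` and
`H*/K* = H/K - ρ`. -/
theorem stmt15 (U : Set Param) (x : Param → Vec3)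
    (hU : IsOpen U) (hUconn : IsConnected U)
    (hx : ContDiffOn ℝ (⊤ : ℕ∞) x U) (himm : Immersed x U)
    (hpar : ∀ u ∈ U, (fformII x (gaussMap x) u).det ≠ 0)
    (ρ : ℝ) (hρ : ρ ≠ 0)
    (hreg : ∀ u ∈ U,
      1 - 2 * ρ * meanCurv x (gaussMap x) u + ρ ^ 2 * gaussCurv x (gaussMap x) u ≠ 0) :
    ContDiffOn ℝ (⊤ : ℕ∞) (parallelSurface x ρ) U ∧
    Immersed (parallelSurface x ρ) U ∧
    IsUnitNormalOn (parallelSurface x ρ) (gaussMap x) U ∧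
    ∀ u ∈ U,
      gaussMap (parallelSurface x ρ) u =
        Real.sign (1 - 2 * ρ * meanCurv x (gaussMap x) u
          + ρ ^ 2 * gaussCurv x (gaussMap x) u) • gaussMap x u ∧
      fformIII (gaussMap (parallelSurface x ρ)) u = fformIII (gaussMap x) u ∧
      gaussCurv (parallelSurface x ρ) (gaussMap x) u ≠ 0 ∧
      meanCurv (parallelSurface x ρ) (gaussMap x) u /
          gaussCurv (parallelSurface x ρ) (gaussMap x) u =
        meanCurv x (gaussMap x) u / gaussCurv x (gaussMap x) u - ρ := by
  obtain ⟨hsmooth, himm', hnormal, h⟩ :=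
    stmt15_general (n := (⊤ : ℕ∞)) (WithTop.coe_le_coe.2 le_top) hU hx himm hreg
  exact ⟨hsmooth, himm', hnormal, fun u hu => (h u hu).imp_right (.imp_right (· (hpar u hu)))⟩
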